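/- In the Coxeter group W of type E6, for all integers i, j with 1 ≤ i < j ≤ 5, the identity x'_{6,i} · x'_{5,j} · x6 = x4 · x'_{6,i} · x'_{5,j} holds. -/

import Mathlib

/-- The descending product `x i * x (i-1) * ... * x j` (equal to `1` when `j > i`). -/
def descProd {G : Type*} [Group G] (x : ℤ → G) (i j : ℤ) : G :=
  ((List.range (i + 1 - j).toNat).map (fun n => x (i - (n : ℤ)))).prod

/-- The product `x i * x (i-2) * x (i-3) * ... * x j`, with the conventions
`primProd x i (i-1) = x i` and `primProd x i j = 1` for `j ≥ i`. -/
def primProd {G : Type*} [Group G] (x : ℤ → G) (i j : ℤ) : G :=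
  if i ≤ j then 1 else x i * descProd x (i - 2) j

/-!
The braid relation `x₆ x₄ x₆ = x₄ x₆ x₄` says that `x₆ x₄` intertwines `x₆` with `x₄`. Every
further letter of `x'_{6,i} x'_{5,j}` is one of `x₁, x₂, x₃, x₅` and so commutes with `x₆`; hence
the whole word intertwines `x₆` with `x₄`. The same argument works for any index
`n` in place of `6`.
-/

theorem semiconjBy_mul_of_braid {S : Type*} [Semigroup S] {a b : S}
    (h : a * b * a = b * a * b) : SemiconjBy (a * b) a b := by
  rw [SemiconjBy, h, mul_assoc]

section

variable {G : Type*} [Group G] {x : ℤ → G} {g : G} {i j : ℤ}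

-- In `descProd` the list of naturals elaborates to its monadic lift to `List ℤ`, so that the mapped
-- function takes an integer; this is the form over `ℕ`.
theorem descProd_eq_prod_map_range :
    descProd x i j = ((List.range (i + 1 - j).toNat).map fun n : ℕ => x (i - n)).prod := by
  simp [descProd, ← List.map_eq_flatMap, Function.comp_def]

theorem descProd_eq_mul_descProd_sub_one (h : j ≤ i) :
    descProd x i j = x i * descProd x (i - 1) j := by
  have hlen : (i + 1 - j).toNat = (i - 1 + 1 - j).toNat + 1 := by lia
  have hindex (n : ℕ) : i - ((n + 1 : ℕ) : ℤ) = i - 1 - n := by lia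
  simp only [descProd_eq_prod_map_range, hlen, List.range_succ_eq_map, List.map_cons, List.map_map,
    List.prod_cons, Function.comp_def, Nat.succ_eq_add_one, hindex, Nat.cast_zero, sub_zero]

theorem primProd_eq_mul_mul_descProd (h : j ≤ i - 2) :
    primProd x i j = x i * x (i - 2) * descProd x (i - 3) j := by
  rw [primProd, if_neg (by lia), descProd_eq_mul_descProd_sub_one h, mul_assoc,
    show i - 2 - 1 = i - 3 by ring]

theorem commute_descProd (h : ∀ k, j ≤ k → k ≤ i → Commute g (x k)) :
    Commute g (descProd x i j) := by
  rw [descProd_eq_prod_map_range]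
  refine Commute.list_prod_right _ _ fun y hy => ?_
  obtain ⟨n, hn, rfl⟩ := List.mem_map.mp hy
  have hlt := List.mem_range.mp hn
  exact h _ (by lia) (by lia)

theorem commute_primProd (h : ∀ k, j ≤ k → k ≤ i → k ≠ i - 1 → Commute g (x k)) :
    Commute g (primProd x i j) := by
  unfold primProd
  split_ifs with hij
  · exact Commute.one_right g
  · exact (h i (by lia) le_rfl (by lia)).mul_right
      (commute_descProd fun k hjk hki => h k hjk (by lia) (by lia))

theorem semiconjBy_primProd_of_braid
    (hbraid : x i * x (i - 2) * x i = x (i - 2) * x i * x (i - 2))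
    (hcomm : ∀ k, j ≤ k → k ≤ i - 3 → Commute (x i) (x k)) (h : j ≤ i - 2) :
    SemiconjBy (primProd x i j) (x i) (x (i - 2)) := by
  rw [primProd_eq_mul_mul_descProd h]
  exact (semiconjBy_mul_of_braid hbraid).mul_left (commute_descProd hcomm).symm

end

theorem E6_xi_general {G : Type*} [Group G] {x : ℤ → G} {m n : ℤ}
    (hbraid : x n * x (n - 2) * x n = x (n - 2) * x n * x (n - 2))
    (hcomm : ∀ k, m ≤ k → k < n → k ≠ n - 2 → Commute (x n) (x k))
    {i j : ℤ} (hmi : m ≤ i) (hin : i ≤ n - 2) (hmj : m ≤ j) :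
    primProd x n i * primProd x (n - 1) j * x n =
      x (n - 2) * primProd x n i * primProd x (n - 1) j := by
  have hleft : SemiconjBy (primProd x n i) (x n) (x (n - 2)) :=
    semiconjBy_primProd_of_braid hbraid
      (fun k hik hkn => hcomm k (by lia) (by lia) (by lia)) hin
  have hright : Commute (x n) (primProd x (n - 1) j) :=
    commute_primProd fun k hjk hkn hk => hcomm k (by lia) (by lia) (by lia)
  rw [mul_assoc (x (n - 2))]
  exact hleft.mul_left hright.symm

theorem E6_xi (G : Type*) [Group G] (x : ℤ → G)
    (hsq : ∀ i : ℤ, 1 ≤ i → i ≤ 6 → x i ^ 2 = 1)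
    (hbraid : ∀ i : ℤ, 1 ≤ i → i ≤ 3 → x (i+1) * x i * x (i+1) = x i * x (i+1) * x i)
    (h53 : x 5 * x 3 * x 5 = x 3 * x 5 * x 3)
    (h64 : x 6 * x 4 * x 6 = x 4 * x 6 * x 4)
    (hcomm : ∀ i j : ℤ, 1 ≤ j → j + 1 < i → i ≤ 4 → x i * x j = x j * x i)
    (hcomm5 : ∀ i : ℤ, 1 ≤ i → i ≤ 6 → i ≠ 3 → i ≠ 5 → x 5 * x i = x i * x 5)
    (hcomm6 : ∀ i : ℤ, 1 ≤ i → i ≤ 6 → i ≠ 4 → i ≠ 6 → x 6 * x i = x i * x 6) :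
    ∀ i j : ℤ, 1 ≤ i → i < j → j ≤ 5 →
      primProd x 6 i * primProd x 5 j * x 6 = x 4 * primProd x 6 i * primProd x 5 j := by
  intro i j hi hij hj
  exact E6_xi_general (m := 1) (n := 6) h64
    (fun k hk hk6 hk4 => hcomm6 k hk (by lia) hk4 (by lia)) hi (by lia) (by lia)
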